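/- Random Diarchy is the class of mechanisms that sample two voters i, j ∈ [n] independently and uniformly at random with replacement and output the convex combination α·v_i + (1−α)·v_j, where α = α(P, i, j) ∈ [0,1] may depend arbitrarily on the whole vote profile P and the sampled pair. The infimum over Random Diarchy of the distortion equals 2. Precisely: (a) for every such coefficient rule α and every ε > 0 there exist m, n and a vote profile (v_1,…,v_n) of budgets on m projects with min_{p∈𝔹} Σ_{l=1}^n d(p, v_l) > 0 such that (1/n²) Σ_{(i,j)∈[n]²} Σ_{l=1}^n d(α(P,i,j)·v_i + (1−α(P,i,j))·v_j, v_l) > (2 − ε)·min_{p∈𝔹} Σ_{l=1}^n d(p, v_l); and (b) the constant rule α ≡ 1 satisfies, for every vote profile, (1/n²) Σ_{(i,j)∈[n]²} Σ_{l=1}^n d(v_i, v_l) ≤ 2·min_{p∈𝔹} Σ_{l=1}^n d(p, v_l). -/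

import Mathlib

/-- A budget on `m` projects: nonnegative allocations summing to 1. -/
def IsBudget {m : ℕ} (b : Fin m → ℝ) : Prop :=
  (∀ j, 0 ≤ b j) ∧ ∑ j, b j = 1

/-- The ℓ₁ cost `d(a,b)`. -/
noncomputable def cost {m : ℕ} (a b : Fin m → ℝ) : ℝ := ∑ j, |a j - b j|

/-! For `n` voters, no rule that outputs affine combinations `∑ k, w k • v k`, `∑ k, w k = 1`, of
the votes has distortion below `2 - 2 / n`. Take `n` pairs of projects and let voter `k` move the
whole budget of the `k`-th pair to its first project. Recording the amount moved within each pair,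
and rescaling, the voters become the standard basis vectors. The origin has `ℓ₁` distance `1` from
each of them and lies metrically between any two, so it is the optimum, while every point `w` with
`∑ i, w i = 1` has distance at least `2 * (1 - w k)` from the `k`-th vector, hence at least
`2 * (n - 1)` in total. The matching upper bound for a uniformly random vote is the triangle
inequality through `p`, summed over pairs of distinct voters. -/

section Median

variable {ι X : Type*} [Fintype ι] [PseudoMetricSpace X]

lemma sum_sum_add_sub_diag [DecidableEq ι] (f : ι → ℝ) :
    ∑ i, ∑ j, (f i + f j - if i = j then 2 * f i else 0) =
      2 * ((Fintype.card ι : ℝ) - 1) * ∑ i, f i := by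
  simp only [Finset.sum_sub_distrib, Finset.sum_add_distrib, Finset.sum_const, Finset.card_univ,
    nsmul_eq_mul, Finset.sum_ite_eq, Finset.mem_univ, if_true, ← Finset.mul_sum]
  ring

lemma sum_sum_dist_le (x : ι → X) (p : X) :
    ∑ i, ∑ j, dist (x i) (x j) ≤ 2 * ((Fintype.card ι : ℝ) - 1) * ∑ i, dist p (x i) := by
  classical
  rw [← sum_sum_add_sub_diag]
  gcongr with i _ j _
  split_ifs with h
  · simp [h, two_mul]
  · simpa using dist_triangle_left (x i) (x j) p

lemma sum_dist_le_sum_dist_of_pairwise_between [Nontrivial ι] {x : ι → X} {z : X}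
    (hz : Pairwise fun i j ↦ dist z (x i) + dist z (x j) ≤ dist (x i) (x j)) (p : X) :
    ∑ i, dist z (x i) ≤ ∑ i, dist p (x i) := by
  classical
  have hcard : (0 : ℝ) < 2 * ((Fintype.card ι : ℝ) - 1) := by
    have : (1 : ℝ) < Fintype.card ι := mod_cast Fintype.one_lt_card
    linarith
  refine le_of_mul_le_mul_left (le_trans ?_ (sum_sum_dist_le x p)) hcard
  rw [← sum_sum_add_sub_diag]
  gcongr with i _ j _
  split_ifs with h
  · simp [h, two_mul]
  · simpa using hz h

end Median

section StandardBasis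

variable {ι : Type*} [Fintype ι] [DecidableEq ι] {w : ι → ℝ}

lemma two_mul_one_sub_le_sum_abs_sub_single (hw : ∑ i, w i = 1) (k : ι) :
    2 * (1 - w k) ≤ ∑ i, |w i - (Pi.single k 1 : ι → ℝ) i| := by
  calc 2 * (1 - w k)
      = ∑ i, (w i - (Pi.single k 1 : ι → ℝ) i + if i = k then 2 * (1 - w k) else 0) := by
        simp [Finset.sum_add_distrib, hw]
    _ ≤ ∑ i, |w i - (Pi.single k 1 : ι → ℝ) i| := by
        gcongr with i
        rcases eq_or_ne i k with rfl | h
        · rw [if_pos rfl, Pi.single_eq_same]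
          linarith [neg_le_abs (w i - 1)]
        · simpa [h] using le_abs_self (w i)

lemma two_mul_card_sub_one_le_sum_sum_abs_sub_single (hw : ∑ i, w i = 1) :
    2 * ((Fintype.card ι : ℝ) - 1) ≤ ∑ k, ∑ i, |w i - (Pi.single k 1 : ι → ℝ) i| := by
  calc 2 * ((Fintype.card ι : ℝ) - 1) = ∑ k, 2 * (1 - w k) := by
        simp [← Finset.mul_sum, hw]
    _ ≤ _ := Finset.sum_le_sum fun k _ ↦ two_mul_one_sub_le_sum_abs_sub_single hw k

end StandardBasis

section Cost

variable {m n : ℕ}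

lemma cost_eq_dist_toLp (a b : Fin m → ℝ) :
    cost a b = dist (WithLp.toLp 1 a) (WithLp.toLp 1 b) := by
  simp [cost, PiLp.dist_eq_of_L1, Real.dist_eq]

lemma cost_nonneg (a b : Fin m → ℝ) : 0 ≤ cost a b :=
  Finset.sum_nonneg fun _ _ ↦ abs_nonneg _

lemma sum_sum_cost_le (v : Fin n → Fin m → ℝ) (p : Fin m → ℝ) :
    ∑ i, ∑ l, cost (v i) (v l) ≤ 2 * ((n : ℝ) - 1) * ∑ l, cost p (v l) := by
  simpa only [cost_eq_dist_toLp, Fintype.card_fin] using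
    sum_sum_dist_le (fun i ↦ WithLp.toLp 1 (v i)) (WithLp.toLp 1 p)

lemma le_average_cost_of_affine_combination (hn : n ≠ 0) {v : Fin n → Fin m → ℝ} {C : ℝ}
    (hC : ∀ w : Fin n → ℝ, ∑ k, w k = 1 → C ≤ ∑ l, cost (∑ k, w k • v k) (v l))
    (α : Fin n → Fin n → ℝ) :
    C ≤ (1 / (n : ℝ) ^ 2) * ∑ i, ∑ j, ∑ l,
      cost (fun t ↦ α i j * v i t + (1 - α i j) * v j t) (v l) := by
  have hpair (i j : Fin n) :
      C ≤ ∑ l, cost (fun t ↦ α i j * v i t + (1 - α i j) * v j t) (v l) := by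
    convert hC (Pi.single i (α i j) + Pi.single j (1 - α i j)) ?_ using 3
    · ext t
      simp [add_mul, Finset.sum_add_distrib, Pi.single_apply, ite_mul]
    · simp [Finset.sum_add_distrib]
  calc C = (1 / (n : ℝ) ^ 2) * ∑ _i : Fin n, ∑ _j : Fin n, C := by
        simp only [Finset.sum_const, Finset.card_univ, Fintype.card_fin, nsmul_eq_mul]
        field_simp
    _ ≤ _ := by gcongr with i _ j _; exact hpair i j

end Cost

section HardProfile

variable {n : ℕ}

/-- The allocation to `n` pairs of projects, each pair receiving `1 / n` in total, that moves the
fraction `x i` of the half share `1 / (2 * n)` from the second to the first project of pair `i`.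
The first projects come first in `Fin (n + n)`. -/
noncomputable def pairedShift (x : Fin n → ℝ) : Fin (n + n) → ℝ :=
  Fin.append (fun i ↦ (1 + x i) / (2 * n)) (fun i ↦ (1 - x i) / (2 * n))

/-- The worst-case votes: voter `k` gives the whole share of pair `k` to its first project and
splits every other pair evenly. -/
noncomputable def hardProfile (n : ℕ) (k : Fin n) : Fin (n + n) → ℝ :=
  pairedShift (Pi.single k 1)

lemma pairedShift_castAdd (x : Fin n → ℝ) (i : Fin n) :
    pairedShift x (Fin.castAdd n i) = (1 + x i) / (2 * n) :=
  Fin.append_left _ _ i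

lemma pairedShift_natAdd (x : Fin n → ℝ) (i : Fin n) :
    pairedShift x (Fin.natAdd n i) = (1 - x i) / (2 * n) :=
  Fin.append_right _ _ i

lemma isBudget_pairedShift (hn : n ≠ 0) {x : Fin n → ℝ} (hx : ∀ i, |x i| ≤ 1) :
    IsBudget (pairedShift x) := by
  refine ⟨fun t ↦ ?_, ?_⟩
  · refine Fin.addCases (fun i ↦ ?_) (fun i ↦ ?_) t
    · rw [pairedShift_castAdd]
      exact div_nonneg (by linarith [neg_le_of_abs_le (hx i)]) (by positivity)
    · rw [pairedShift_natAdd]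
      exact div_nonneg (by linarith [le_of_abs_le (hx i)]) (by positivity)
  · calc ∑ t, pairedShift x t = ∑ i : Fin n, ((1 + x i) / (2 * n) + (1 - x i) / (2 * n)) := by
          simp only [Fin.sum_univ_add, pairedShift_castAdd, pairedShift_natAdd,
            Finset.sum_add_distrib]
      _ = ∑ _i : Fin n, (1 / n : ℝ) := by
          congr! 1 with i
          field_simp
          ring
      _ = 1 := by simp [hn]

lemma isBudget_hardProfile (k : Fin n) : IsBudget (hardProfile n k) := by
  refine isBudget_pairedShift k.pos.ne' fun i ↦ ?_
  rw [Pi.single_apply]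
  split_ifs <;> simp

lemma cost_pairedShift (x y : Fin n → ℝ) :
    cost (pairedShift x) (pairedShift y) = (∑ i, |x i - y i|) / n := by
  simp only [cost, Fin.sum_univ_add, pairedShift_castAdd, pairedShift_natAdd,
    ← Finset.sum_add_distrib, Finset.sum_div]
  refine Finset.sum_congr rfl fun i _ ↦ ?_
  rw [← sub_div, ← sub_div, add_sub_add_left_eq_sub, sub_sub_sub_cancel_left, abs_div, abs_div,
    abs_sub_comm (y i), abs_of_nonneg (by positivity : (0 : ℝ) ≤ 2 * n), ← add_div, ← two_mul,
    mul_div_mul_left _ _ two_ne_zero]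

lemma sum_smul_hardProfile {w : Fin n → ℝ} (hw : ∑ k, w k = 1) :
    ∑ k, w k • hardProfile n k = pairedShift w := by
  ext t
  refine Fin.addCases (fun i ↦ ?_) (fun i ↦ ?_) t
  · simp only [Finset.sum_apply, Pi.smul_apply, smul_eq_mul, hardProfile, pairedShift_castAdd]
    simp [← mul_div_assoc, ← Finset.sum_div, mul_add, Finset.sum_add_distrib, hw, Pi.single_apply]
  · simp only [Finset.sum_apply, Pi.smul_apply, smul_eq_mul, hardProfile, pairedShift_natAdd]
    simp [← mul_div_assoc, ← Finset.sum_div, mul_sub, Finset.sum_sub_distrib, hw, Pi.single_apply]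

lemma cost_pairedShift_zero_hardProfile (k : Fin n) :
    cost (pairedShift 0) (hardProfile n k) = 1 / n := by
  rw [hardProfile, cost_pairedShift]
  simp [Pi.single_apply, apply_ite abs]

lemma sum_cost_pairedShift_zero_hardProfile (hn : n ≠ 0) :
    ∑ l, cost (pairedShift 0) (hardProfile n l) = 1 := by
  simp [cost_pairedShift_zero_hardProfile, hn]

lemma two_div_le_cost_hardProfile {k l : Fin n} (hkl : k ≠ l) :
    2 / n ≤ cost (hardProfile n k) (hardProfile n l) := by
  rw [hardProfile, hardProfile, cost_pairedShift]
  gcongr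
  simpa [hkl.symm] using
    two_mul_one_sub_le_sum_abs_sub_single (w := Pi.single k (1 : ℝ)) (by simp) l

lemma sum_cost_pairedShift_zero_le (hn : 2 ≤ n) (p : Fin (n + n) → ℝ) :
    ∑ l, cost (pairedShift 0) (hardProfile n l) ≤ ∑ l, cost p (hardProfile n l) := by
  have : Nontrivial (Fin n) := Fin.nontrivial_iff_two_le.mpr hn
  simp only [cost_eq_dist_toLp]
  refine sum_dist_le_sum_dist_of_pairwise_between (fun k l hkl ↦ ?_) _
  simp only [← cost_eq_dist_toLp, cost_pairedShift_zero_hardProfile, ← add_div, one_add_one_eq_two]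
  exact two_div_le_cost_hardProfile hkl

lemma two_sub_le_sum_cost_affine_combination_hardProfile (hn : n ≠ 0) {w : Fin n → ℝ}
    (hw : ∑ k, w k = 1) :
    2 - 2 / (n : ℝ) ≤ ∑ l, cost (∑ k, w k • hardProfile n k) (hardProfile n l) := by
  rw [sum_smul_hardProfile hw]
  simp only [hardProfile, cost_pairedShift, ← Finset.sum_div]
  calc 2 - 2 / (n : ℝ) = 2 * ((n : ℝ) - 1) / n := by field_simp
    _ ≤ _ := by
      gcongr
      simpa only [Fintype.card_fin] using two_mul_card_sub_one_le_sum_sum_abs_sub_single hw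

end HardProfile

lemma exists_two_div_natCast_lt {ε : ℝ} (hε : 0 < ε) : ∃ n : ℕ, 2 ≤ n ∧ 2 / (n : ℝ) < ε :=
  ((Filter.eventually_ge_atTop 2).and
    ((tendsto_const_div_atTop_nhds_zero_nat 2).eventually_lt_const hε)).exists

theorem random_diarchy_distortion_two_general :
    (∀ n : ℕ, 2 ≤ n → ∃ (m : ℕ) (v : Fin n → Fin m → ℝ) (popt : Fin m → ℝ),
      (∀ i, IsBudget (v i)) ∧ IsBudget popt ∧
      (∀ p : Fin m → ℝ, ∑ l, cost popt (v l) ≤ ∑ l, cost p (v l)) ∧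
      0 < ∑ l, cost popt (v l) ∧
      ∀ w : Fin n → ℝ, ∑ k, w k = 1 →
        (2 - 2 / (n : ℝ)) * ∑ l, cost popt (v l) ≤ ∑ l, cost (∑ k, w k • v k) (v l)) ∧
    (∀ (m n : ℕ) (v : Fin n → Fin m → ℝ) (p : Fin m → ℝ),
      (1 / (n : ℝ) ^ 2) * ∑ i : Fin n, ∑ _j : Fin n, ∑ l, cost (v i) (v l) ≤
        (2 - 2 / (n : ℝ)) * ∑ l, cost p (v l)) := by
  refine ⟨fun n hn ↦ ?_, fun m n v p ↦ ?_⟩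
  · have hn0 : n ≠ 0 := by lia
    refine ⟨n + n, hardProfile n, pairedShift 0, isBudget_hardProfile,
      isBudget_pairedShift hn0 (by simp), sum_cost_pairedShift_zero_le hn, ?_, fun w hw ↦ ?_⟩
    · simp [sum_cost_pairedShift_zero_hardProfile hn0]
    · rw [sum_cost_pairedShift_zero_hardProfile hn0, mul_one]
      exact two_sub_le_sum_cost_affine_combination_hardProfile hn0 hw
  · rcases eq_or_ne n 0 with rfl | hn
    · simp
    calc (1 / (n : ℝ) ^ 2) * ∑ i : Fin n, ∑ _j : Fin n, ∑ l, cost (v i) (v l)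
        = (1 / n) * ∑ i, ∑ l, cost (v i) (v l) := by
          simp only [Finset.sum_const, Finset.card_univ, Fintype.card_fin, nsmul_eq_mul,
            ← Finset.mul_sum]
          field_simp
      _ ≤ (1 / n) * (2 * ((n : ℝ) - 1) * ∑ l, cost p (v l)) := by
          gcongr
          exact sum_sum_cost_le v p
      _ = (2 - 2 / (n : ℝ)) * ∑ l, cost p (v l) := by field_simp

/-- The infimum over Random Diarchy mechanisms of the distortion equals 2:
(a) for every coefficient rule `α` (with values in `[0,1]`, possibly depending on the
whole vote profile and the sampled ordered pair) and every `ε > 0` there is an instance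
with positive optimal social cost where the expected social cost of the output
`α·v_i + (1−α)·v_j` exceeds `(2 − ε)` times the optimum; and
(b) the constant rule `α ≡ 1` achieves a distortion of at most 2 on every profile. -/
theorem random_diarchy_distortion_two :
    (∀ α : (m n : ℕ) → (Fin n → Fin m → ℝ) → Fin n → Fin n → ℝ,
      (∀ (m n : ℕ) (v : Fin n → Fin m → ℝ) (i j : Fin n),
        0 ≤ α m n v i j ∧ α m n v i j ≤ 1) →
      ∀ ε : ℝ, 0 < ε →
        ∃ (m n : ℕ) (v : Fin n → Fin m → ℝ) (popt : Fin m → ℝ),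
          (∀ i, IsBudget (v i)) ∧ IsBudget popt ∧
          (∀ p : Fin m → ℝ, IsBudget p →
            ∑ l, cost popt (v l) ≤ ∑ l, cost p (v l)) ∧
          0 < ∑ l, cost popt (v l) ∧
          (2 - ε) * ∑ l, cost popt (v l) <
            (1 / (n : ℝ) ^ 2) * ∑ i, ∑ j, ∑ l,
              cost (fun t => α m n v i j * v i t + (1 - α m n v i j) * v j t) (v l)) ∧
    (∀ (m n : ℕ) (v : Fin n → Fin m → ℝ), (∀ i, IsBudget (v i)) →
      ∀ p : Fin m → ℝ, IsBudget p →
        (1 / (n : ℝ) ^ 2) * ∑ i : Fin n, ∑ j : Fin n, ∑ l, cost (v i) (v l) ≤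
          2 * ∑ l, cost p (v l)) := by
  refine ⟨fun α _ ε hε ↦ ?_, fun m n v _ p _ ↦
    (random_diarchy_distortion_two_general.2 m n v p).trans ?_⟩
  · obtain ⟨n, hn, hnε⟩ := exists_two_div_natCast_lt hε
    obtain ⟨m, v, popt, hv, hpopt, hmin, hpos, haff⟩ :=
      random_diarchy_distortion_two_general.1 n hn
    refine ⟨m, n, v, popt, hv, hpopt, fun p _ ↦ hmin p, hpos, lt_of_lt_of_le ?_
      (le_average_cost_of_affine_combination (by lia) haff (α m n v))⟩
    gcongr
  · gcongr
    · exact Finset.sum_nonneg fun l _ ↦ cost_nonneg p (v l)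
    · exact sub_le_self 2 (by positivity)
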